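/- Assume M is finite-dimensional over K and the polar bilinear form of Q is nondegenerate. Let A ∈ Cl(Q) satisfy ι(x)·A = α(A)·ι(x) for every vector x ∈ M (equivalently, the left contraction x ⌟ A = (1/2)(ι(x)·A − α(A)·ι(x)) vanishes for all x). Then A is a scalar: A lies in the image of algebraMap K Cl(Q). -/

import Mathlib

open CliffordAlgebra

/-!
Contraction by the functional `polar Q (x, ·)` is the twisted commutator with `ι x`, so all these
functionals contract `A` to zero. If `d v = 1` and `d` vanishes on `s`, then
`a ↦ a - ι v * contractLeft d a` maps the subalgebra generated by `insert v s` into the one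
generated by `s`, and it fixes every `a` with `contractLeft d a = 0`. Hence the finitely many
vectors needed to write `A` can be removed one at a time, until only vectors in the kernel of the
polar form remain; nondegeneracy leaves only the zero vector.
-/

theorem adjoin_toSubmodule_le_of_mul_mem {R A : Type*} [CommSemiring R] [Semiring A] [Algebra R A]
    {s : Set A} {N : Submodule R A} (one : 1 ∈ N) (mul : ∀ a ∈ s, ∀ b ∈ N, a * b ∈ N) :
    (Algebra.adjoin R s).toSubmodule ≤ N := by
  rw [Algebra.adjoin_eq_span, Submodule.span_le]
  intro a ha
  induction ha using Submonoid.closure_induction_left with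
  | one => exact one
  | mul_left a ha b _ hb => exact mul a ha b hb

theorem exists_apply_eq_one_of_notMem_span_sup_ker {K V W : Type*} [Field K]
    [AddCommGroup V] [Module K V] [AddCommGroup W] [Module K W] {B : V →ₗ[K] W →ₗ[K] K}
    {t : Set V} (ht : t.Finite) {v : V} (hv : v ∉ Submodule.span K t ⊔ LinearMap.ker B) :
    ∃ w, B v w = 1 ∧ ∀ u ∈ t, B u w = 0 := by
  have := ht.to_subtype
  have notMem_span : B v ∉ Submodule.span K (Set.range fun u : t => B u) := by
    rwa [← Submodule.comap_map_eq, Submodule.mem_comap, Submodule.map_span,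
      Set.image_eq_range] at hv
  obtain ⟨w, hwt, hwv⟩ :=
    SetLike.not_le_iff_exists.mp fun hle => notMem_span (mem_span_of_iInf_ker_le_ker hle)
  simp only [Submodule.mem_iInf, LinearMap.mem_ker, Subtype.forall] at hwt hwv
  refine ⟨(B v w)⁻¹ • w, ?_, fun u hu => ?_⟩
  · rw [map_smul, smul_eq_mul, inv_mul_cancel₀ hwv]
  · rw [map_smul, hwt u hu, smul_zero]

section CommRing

variable {R M : Type*} [CommRing R] [AddCommGroup M] [Module R M] {Q : QuadraticForm R M}

theorem contractLeft_polarBilin (x : M) (a : CliffordAlgebra Q) :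
    contractLeft (Q.polarBilin x) a = ι Q x * a - involute a * ι Q x := by
  induction a using CliffordAlgebra.left_induction with
  | algebraMap r => rw [contractLeft_algebraMap, AlgHom.commutes, Algebra.commutes, sub_self]
  | add a b ha hb => rw [map_add, ha, hb, map_add]; noncomm_ring
  | ι_mul a m ha =>
    rw [contractLeft_ι_mul, ha, map_mul, involute_ι, Algebra.smul_def,
      QuadraticMap.polarBilin_apply_apply, ← ι_mul_ι_add_swap]
    noncomm_ring

theorem exists_finset_mem_adjoin_ι_image (a : CliffordAlgebra Q) :
    ∃ t : Finset M, a ∈ Algebra.adjoin R (ι Q '' t) := by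
  classical
  have adjoin_mono {s t : Finset M} (hst : s ⊆ t) :
      Algebra.adjoin R (ι Q '' s) ≤ Algebra.adjoin R (ι Q '' t) :=
    Algebra.adjoin_mono (Set.image_mono (Finset.coe_subset.mpr hst))
  induction a using CliffordAlgebra.left_induction with
  | algebraMap r => exact ⟨∅, Subalgebra.algebraMap_mem _ r⟩
  | add a b ha hb =>
    obtain ⟨s, hs⟩ := ha
    obtain ⟨t, ht⟩ := hb
    exact ⟨s ∪ t, add_mem (adjoin_mono Finset.subset_union_left hs)
      (adjoin_mono Finset.subset_union_right ht)⟩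
  | ι_mul a m ha =>
    obtain ⟨t, ht⟩ := ha
    exact ⟨insert m t, mul_mem
      (Algebra.subset_adjoin (Set.mem_image_of_mem _ (Finset.mem_insert_self m t)))
      (adjoin_mono (Finset.subset_insert m t) ht)⟩

theorem adjoin_ι_image_insert_of_mem_span {v : M} {s : Set M} (hv : v ∈ Submodule.span R s) :
    Algebra.adjoin R (ι Q '' insert v s) = Algebra.adjoin R (ι Q '' s) := by
  rw [← Algebra.adjoin_span, Submodule.span_image, Submodule.span_insert_eq_span hv,
    ← Submodule.span_image, Algebra.adjoin_span]

variable {d : Module.Dual R M} {v : M} {s : Set M}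

theorem sub_ι_mul_contractLeft_mem_adjoin (hv : d v = 1) (hs : ∀ m ∈ s, d m = 0)
    {a : CliffordAlgebra Q} (ha : a ∈ Algebra.adjoin R (ι Q '' insert v s)) :
    a - ι Q v * contractLeft d a ∈ Algebra.adjoin R (ι Q '' s) := by
  set S := Algebra.adjoin R (ι Q '' s)
  let N : Submodule R (CliffordAlgebra Q) :=
    S.toSubmodule.comap (LinearMap.id - LinearMap.mulLeft R (ι Q v) ∘ₗ contractLeft d) ⊓
      S.toSubmodule.comap (contractLeft d)
  have mem_N {b} : b ∈ N ↔ b - ι Q v * contractLeft d b ∈ S ∧ contractLeft d b ∈ S := Iff.rfl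
  -- Only the two memberships together are stable under left multiplication by the generators.
  suffices (Algebra.adjoin R (ι Q '' insert v s)).toSubmodule ≤ N from (mem_N.mp (this ha)).1
  refine adjoin_toSubmodule_le_of_mul_mem ?_ ?_
  · simp only [mem_N, contractLeft_one, mul_zero, sub_zero, one_mem, zero_mem, and_self]
  rintro _ ⟨m, rfl | hm, rfl⟩ b hb <;> obtain ⟨hproj, hcontract⟩ := mem_N.mp hb
  · have contract_eq : contractLeft d (ι Q m * b) = b - ι Q m * contractLeft d b := by
      rw [contractLeft_ι_mul, hv, one_smul]
    have proj_eq : ι Q m * b - ι Q m * (b - ι Q m * contractLeft d b) = Q m • contractLeft d b := by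
      rw [mul_sub, sub_sub_cancel, ← mul_assoc, ι_sq_scalar, Algebra.smul_def]
    rw [mem_N, contract_eq, proj_eq]
    exact ⟨S.smul_mem hcontract _, hproj⟩
  · have hιm : ι Q m ∈ S := Algebra.subset_adjoin (Set.mem_image_of_mem _ hm)
    have contract_eq : contractLeft d (ι Q m * b) = -(ι Q m * contractLeft d b) := by
      rw [contractLeft_ι_mul, hs m hm, zero_smul, zero_sub]
    have proj_eq : ι Q m * b - ι Q v * -(ι Q m * contractLeft d b) =
        ι Q m * (b - ι Q v * contractLeft d b) + QuadraticMap.polar Q m v • contractLeft d b := by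
      rw [Algebra.smul_def, ← ι_mul_ι_add_swap]
      noncomm_ring
    rw [mem_N, contract_eq, proj_eq]
    exact ⟨add_mem (mul_mem hιm hproj) (S.smul_mem hcontract _), neg_mem (mul_mem hιm hcontract)⟩

theorem mem_adjoin_ι_image_of_contractLeft_eq_zero (hv : d v = 1) (hs : ∀ m ∈ s, d m = 0)
    {a : CliffordAlgebra Q} (ha : a ∈ Algebra.adjoin R (ι Q '' insert v s))
    (hda : contractLeft d a = 0) :
    a ∈ Algebra.adjoin R (ι Q '' s) := by
  simpa only [hda, mul_zero, sub_zero] using sub_ι_mul_contractLeft_mem_adjoin hv hs ha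

end CommRing

section Field

variable {K M : Type*} [Field K] [AddCommGroup M] [Module K M] {Q : QuadraticForm K M}

theorem mem_adjoin_ι_image_ker_flip {W : Type*} [AddCommGroup W] [Module K W]
    {B : W →ₗ[K] M →ₗ[K] K} {a : CliffordAlgebra Q} (h : ∀ w, contractLeft (B w) a = 0) :
    a ∈ Algebra.adjoin K (ι Q '' LinearMap.ker B.flip) := by
  classical
  obtain ⟨t, ht⟩ := exists_finset_mem_adjoin_ι_image a
  replace ht : a ∈ Algebra.adjoin K (ι Q '' (t ∪ LinearMap.ker B.flip)) :=
    Algebra.adjoin_mono (Set.image_mono Set.subset_union_left) ht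
  induction t using Finset.induction_on with
  | empty => simpa only [Finset.coe_empty, Set.empty_union] using ht
  | insert v t _ ih =>
    rw [Finset.coe_insert, Set.insert_union] at ht
    apply ih
    by_cases hv : v ∈ Submodule.span K t ⊔ LinearMap.ker B.flip
    · rw [← Submodule.span_eq (LinearMap.ker B.flip), ← Submodule.span_union] at hv
      rwa [adjoin_ι_image_insert_of_mem_span hv] at ht
    · obtain ⟨w, hwv, hwt⟩ := exists_apply_eq_one_of_notMem_span_sup_ker t.finite_toSet hv
      refine mem_adjoin_ι_image_of_contractLeft_eq_zero (d := B w) hwv ?_ ht (h w)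
      rintro m (hm | hm)
      · exact hwt m hm
      · exact LinearMap.congr_fun hm w

theorem mem_adjoin_ι_image_ker_polarBilin {a : CliffordAlgebra Q}
    (h : ∀ x : M, ι Q x * a = involute a * ι Q x) :
    a ∈ Algebra.adjoin K (ι Q '' LinearMap.ker Q.polarBilin) := by
  have contract_eq_zero (x : M) : contractLeft (Q.polarBilin x) a = 0 := by
    rw [contractLeft_polarBilin, h, sub_self]
  have flip_eq : Q.polarBilin.flip = Q.polarBilin :=
    LinearMap.ext₂ fun x y => QuadraticMap.polar_comm Q y x
  simpa only [flip_eq] using mem_adjoin_ι_image_ker_flip contract_eq_zero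

theorem mem_range_algebraMap_of_forall_ι_mul_eq_general
    (hQ : Q.polarBilin.Nondegenerate) (A : CliffordAlgebra Q)
    (h : ∀ x : M, ι Q x * A = involute A * ι Q x) :
    ∃ c : K, A = algebraMap K (CliffordAlgebra Q) c := by
  have hA := mem_adjoin_ι_image_ker_polarBilin h
  rw [LinearMap.separatingLeft_iff_ker_eq_bot.mp hQ.1, Submodule.bot_coe, Set.image_singleton,
    map_zero, Algebra.adjoin_singleton_zero, Algebra.mem_bot] at hA
  obtain ⟨c, hc⟩ := hA
  exact ⟨c, hc.symm⟩

end Field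

/-- **Contraction Lemma**: over a finite-dimensional space with nondegenerate polar form,
if `ι(x)·A = α(A)·ι(x)` for every vector `x` (i.e. the left contraction `x ⌟ A` vanishes
for all `x`), then `A` is a scalar. -/
theorem mem_range_algebraMap_of_forall_ι_mul_eq {K M : Type*} [Field K]
    [Invertible (2 : K)] [AddCommGroup M] [Module K M] [FiniteDimensional K M]
    {Q : QuadraticForm K M}
    (hQ : (QuadraticMap.polarBilin Q).Nondegenerate)
    (A : CliffordAlgebra Q)
    (h : ∀ x : M, ι Q x * A = involute A * ι Q x) :
    ∃ c : K, A = algebraMap K (CliffordAlgebra Q) c :=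
  mem_range_algebraMap_of_forall_ι_mul_eq_general hQ A h
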